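/- Let X, Y, U be real random variables on a common probability space with U independent of the pair (X, Y), set W = X + U, and let the characteristic function φ_U of U be nonvanishing. Let K : ℝ → ℝ be continuous and integrable with Fourier transform φ_K integrable and supported in [−1,1], and let ψ : ℝ → ℝ be bounded and measurable. Then for every x ∈ ℝ and h > 0, E[ψ(Y) · K_{U,h}(x − W)] = E[ψ(Y) · h^{-1} K((x − X)/h)]. -/

import Mathlib

/-!
Averaging the deconvolution kernel over the error multiplies its Fourier integrand by `φ_U(t/h)`,
which cancels the denominator: `E[K_{U,h}(y - U)]` is the error-free kernel at `y`, and this is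
`h⁻¹ K(y / h)` by Fourier inversion. Independence lets one average over `U` first, with `(X, Y)`
held fixed, and `W = X + U` only shifts the argument to `y = x - X`.
-/

open MeasureTheory Filter Set
open scoped Topology

/-- Characteristic function of a real random variable `Z` under `P`: `φ_Z(t) = E[e^{itZ}]`. -/
noncomputable def charRV {Ω : Type*} [MeasurableSpace Ω] (P : Measure Ω) (Z : Ω → ℝ) (t : ℝ) : ℂ :=
  ∫ ω, Complex.exp (Complex.I * (t : ℂ) * (Z ω : ℂ)) ∂P

/-- Fourier transform of a kernel `K`: `φ_K(t) = ∫ e^{itv} K(v) dv`. -/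
noncomputable def fourierK (K : ℝ → ℝ) (t : ℝ) : ℂ :=
  ∫ v : ℝ, Complex.exp (Complex.I * (t : ℂ) * (v : ℂ)) * (K v : ℂ)

/-- The deconvolution kernel
`K_{U,h}(x) = (1/(2πh)) ∫ e^{-itx/h} φ_K(t)/φ_U(t/h) dt`. -/
noncomputable def deconvKernel (φK φU : ℝ → ℂ) (h x : ℝ) : ℂ :=
  (1 / (2 * Real.pi * h) : ℝ) •
    ∫ t : ℝ, Complex.exp (-(Complex.I * (t : ℂ) * (x : ℂ) / (h : ℂ))) * (φK t / φU (t / h))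

lemma integral_comp_prodMk_of_indepFun {Ω β γ E : Type*} [MeasurableSpace Ω] [MeasurableSpace β]
    [MeasurableSpace γ] [NormedAddCommGroup E] [NormedSpace ℝ E] {P : Measure Ω}
    [IsFiniteMeasure P] {V : Ω → β} {U : Ω → γ} (hV : AEMeasurable V P) (hU : AEMeasurable U P)
    (hVU : ProbabilityTheory.IndepFun V U P) {f : β × γ → E} (hf : StronglyMeasurable f)
    (hint : Integrable (fun ω => f (V ω, U ω)) P) :
    ∫ ω, f (V ω, U ω) ∂P = ∫ ω, ∫ ω', f (V ω, U ω') ∂P ∂P := by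
  have hlaw : P.map (fun ω => (V ω, U ω)) = (P.map V).prod (P.map U) :=
    hVU.map_prod_eq_prod_map_map hV hU
  have hfint : Integrable f ((P.map V).prod (P.map U)) := by
    rw [← hlaw]
    exact (integrable_map_measure hf.aestronglyMeasurable (hV.prodMk hU)).2 hint
  calc ∫ ω, f (V ω, U ω) ∂P
      = ∫ p, f p ∂(P.map V).prod (P.map U) := by
        rw [← hlaw, integral_map (hV.prodMk hU) hf.aestronglyMeasurable]
    _ = ∫ v, ∫ u, f (v, u) ∂P.map U ∂P.map V := integral_prod f hfint
    _ = ∫ ω, ∫ u, f (V ω, u) ∂P.map U ∂P :=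
        integral_map hV hf.integral_prod_right'.aestronglyMeasurable
    _ = ∫ ω, ∫ ω', f (V ω, U ω') ∂P ∂P :=
        integral_congr_ae <| .of_forall fun ω =>
          integral_map hU (hf.comp_measurable measurable_prodMk_left).aestronglyMeasurable

lemma integrable_div_of_support_subset {α 𝕜 : Type*} [TopologicalSpace α] [T2Space α]
    [MeasurableSpace α] [OpensMeasurableSpace α] [NormedField 𝕜] [SecondCountableTopologyEither α 𝕜]
    {μ : Measure α} {f g : α → 𝕜} {s : Set α} (hs : IsCompact s) (hf : Integrable f μ)
    (hfs : Function.support f ⊆ s) (hg : ContinuousOn g s) (hg0 : ∀ x ∈ s, g x ≠ 0) :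
    Integrable (fun x => f x / g x) μ := by
  have hquot : Function.support (fun x => f x / g x) ⊆ s :=
    (Function.support_div f g).trans_subset (inter_subset_left.trans hfs)
  rw [← integrableOn_iff_integrable_of_support_subset hquot]
  simp only [div_eq_mul_inv]
  exact hf.integrableOn.mul_continuousOn (hg.inv₀ hg0) hs

section CharacteristicFunction

variable {Ω : Type*} [MeasurableSpace Ω] {P : Measure Ω} {U : Ω → ℝ}

lemma charRV_eq_charFun_map (hU : AEMeasurable U P) : charRV P U = charFun (P.map U) := by
  ext t
  rw [charFun_apply_real, integral_map hU (by fun_prop), charRV]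
  simp only [mul_comm, mul_left_comm]

lemma continuous_charRV [IsFiniteMeasure P] (hU : AEMeasurable U P) : Continuous (charRV P U) := by
  rw [charRV_eq_charFun_map hU]
  exact continuous_charFun

lemma norm_charRV_le [IsFiniteMeasure P] (t : ℝ) : ‖charRV P U t‖ ≤ P.real univ := by
  rw [charRV, ← one_mul (P.real univ)]
  exact norm_integral_le_of_norm_le_const <| .of_forall fun ω => by
    rw [mul_assoc, ← Complex.ofReal_mul, Complex.norm_exp_I_mul_ofReal]

lemma integrable_of_integrable_div_charRV [IsFiniteMeasure P] (hU : AEMeasurable U P)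
    (hφU : ∀ t, charRV P U t ≠ 0) {φK : ℝ → ℂ} {h : ℝ}
    (hquot : Integrable fun t => φK t / charRV P U (t / h)) : Integrable φK := by
  have hcont : Continuous fun t => charRV P U (t / h) :=
    (continuous_charRV hU).comp (continuous_id.div_const h)
  simpa only [div_mul_cancel₀ _ (hφU _)] using
    hquot.mul_bdd hcont.aestronglyMeasurable (.of_forall fun t => norm_charRV_le _)

end CharacteristicFunction

section FourierInversion

open FourierTransform

lemma fourier_ofReal_eq_fourierK (K : ℝ → ℝ) :
    𝓕 (fun v => (K v : ℂ)) = fun w => fourierK K (-(2 * Real.pi) * w) := by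
  ext w
  rw [Real.fourier_real_eq_integral_exp_smul, fourierK]
  congr with v
  rw [smul_eq_mul]
  push_cast
  ring_nf

lemma integral_exp_mul_fourierK {K : ℝ → ℝ} (hK : Integrable K) (hφK : Integrable (fourierK K))
    {v : ℝ} (hv : ContinuousAt K v) :
    ((2 * Real.pi)⁻¹ : ℝ) • ∫ t : ℝ, Complex.exp (-(Complex.I * t * v)) * fourierK K t = K v := by
  have hFint : Integrable (𝓕 fun v => (K v : ℂ)) := by
    rw [fourier_ofReal_eq_fourierK]
    exact hφK.comp_mul_left' (neg_ne_zero.2 Real.two_pi_pos.ne')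
  have hscale : |(-(2 * Real.pi))⁻¹| = (2 * Real.pi)⁻¹ := by
    rw [abs_inv, abs_neg, abs_of_pos Real.two_pi_pos]
  rw [← hK.ofReal.fourierInv_fourier_eq hFint (Complex.continuous_ofReal.continuousAt.comp hv),
    fourier_ofReal_eq_fourierK, Real.fourierInv_eq', ← hscale,
    ← Measure.integral_comp_mul_left
      (fun t : ℝ => Complex.exp (-(Complex.I * t * v)) * fourierK K t) (-(2 * Real.pi))]
  congr with w
  rw [smul_eq_mul, RCLike.inner_apply, conj_trivial]
  push_cast
  ring_nf

end FourierInversion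

section DeconvolutionKernel

variable {φK φU : ℝ → ℂ} {h : ℝ}

lemma norm_exp_neg_I_mul_div (t x h : ℝ) :
    ‖Complex.exp (-(Complex.I * t * x / h))‖ = 1 := by
  simpa [mul_div_assoc, mul_assoc] using Complex.norm_exp_I_mul_ofReal (-(t * x / h))

lemma norm_deconvKernel_le (φK φU : ℝ → ℂ) (h x : ℝ) :
    ‖deconvKernel φK φU h x‖ ≤ |1 / (2 * Real.pi * h)| * ∫ t : ℝ, ‖φK t / φU (t / h)‖ := by
  rw [deconvKernel, norm_smul, Real.norm_eq_abs]
  gcongr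
  simpa only [norm_mul, norm_exp_neg_I_mul_div, one_mul] using norm_integral_le_integral_norm
    fun t : ℝ => Complex.exp (-(Complex.I * t * x / h)) * (φK t / φU (t / h))

lemma continuous_deconvKernel (hquot : Integrable fun t => φK t / φU (t / h)) :
    Continuous (deconvKernel φK φU h) := by
  suffices Continuous fun x : ℝ =>
      ∫ t : ℝ, Complex.exp (-(Complex.I * t * x / h)) * (φK t / φU (t / h)) from
    this.const_smul (1 / (2 * Real.pi * h) : ℝ)
  refine continuous_of_dominated (fun x => ?_) (fun x => .of_forall fun t => ?_) hquot.norm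
    (.of_forall fun t => ?_)
  · exact AEStronglyMeasurable.mul (by fun_prop) hquot.aestronglyMeasurable
  · rw [norm_mul, norm_exp_neg_I_mul_div, one_mul]
  · fun_prop

-- `φU = 1` is the characteristic function of the zero error.
lemma deconvKernel_fourierK_one {K : ℝ → ℝ} (hK : Integrable K) (hφK : Integrable (fourierK K))
    {x : ℝ} (hx : ContinuousAt K (x / h)) :
    deconvKernel (fourierK K) 1 h x = (h⁻¹ * K (x / h) : ℝ) := by
  rw [Complex.ofReal_mul, ← integral_exp_mul_fourierK hK hφK hx, ← Complex.real_smul, smul_smul,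
    ← mul_inv_rev, ← one_div, deconvKernel]
  simp only [Pi.one_apply, div_one, Complex.ofReal_div, mul_div_assoc]

section Averaging

variable {Ω : Type*} [MeasurableSpace Ω] {P : Measure Ω} [IsFiniteMeasure P] {U : Ω → ℝ}

lemma integrable_exp_neg_I_mul_div_mul_prod (hU : AEMeasurable U P) {g : ℝ → ℂ}
    (hg : Integrable g) (h y : ℝ) :
    Integrable (fun p : Ω × ℝ => Complex.exp (-(Complex.I * p.2 * (y - U p.1 : ℝ) / h)) * g p.2)
      (P.prod volume) := by
  refine (hg.comp_snd P).bdd_mul (c := 1) ?_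
    (.of_forall fun p => (norm_exp_neg_I_mul_div p.2 (y - U p.1) h).le)
  exact AEMeasurable.aestronglyMeasurable (by fun_prop)

lemma integral_exp_neg_I_mul_sub_div (P : Measure Ω) (U : Ω → ℝ) (t y h : ℝ) :
    ∫ ω, Complex.exp (-(Complex.I * t * (y - U ω : ℝ) / h)) ∂P
      = Complex.exp (-(Complex.I * t * y / h)) * charRV P U (t / h) := by
  rw [charRV, ← integral_const_mul]
  congr with ω
  rw [← Complex.exp_add]
  push_cast
  ring_nf

lemma integral_deconvKernel_sub (hU : AEMeasurable U P) (hφU : ∀ t, charRV P U t ≠ 0)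
    (hquot : Integrable fun t => φK t / charRV P U (t / h)) (y : ℝ) :
    ∫ ω, deconvKernel φK (charRV P U) h (y - U ω) ∂P = deconvKernel φK 1 h y := by
  simp only [deconvKernel]
  rw [integral_smul, integral_integral_swap (integrable_exp_neg_I_mul_div_mul_prod hU hquot h y)]
  congr with t
  rw [integral_mul_const, integral_exp_neg_I_mul_sub_div, mul_assoc, mul_div_cancel₀ _ (hφU _),
    Pi.one_apply, div_one]

end Averaging

end DeconvolutionKernel

theorem deconv_kernel_unbiased_rv_general {Ω : Type*} [MeasurableSpace Ω] {P : Measure Ω}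
    [IsProbabilityMeasure P] {X U : Ω → ℝ} {Z : Ω → ℂ} (hX : AEMeasurable X P)
    (hU : AEMeasurable U P) (hZ : Integrable Z P)
    (hindep : ProbabilityTheory.IndepFun (fun ω => (X ω, Z ω)) U P)
    (hφU : ∀ t, charRV P U t ≠ 0) {K : ℝ → ℝ} (hKcont : Continuous K) (hKint : Integrable K)
    {h : ℝ} (_hh : h ≠ 0) (hquot : Integrable fun t => fourierK K t / charRV P U (t / h)) (x : ℝ) :
    ∫ ω, Z ω * deconvKernel (fourierK K) (charRV P U) h (x - (X ω + U ω)) ∂P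
      = ∫ ω, Z ω * (h⁻¹ * K ((x - X ω) / h) : ℝ) ∂P := by
  have hφKint : Integrable (fourierK K) := integrable_of_integrable_div_charRV hU hφU hquot
  have hcont : Continuous (deconvKernel (fourierK K) (charRV P U) h) :=
    continuous_deconvKernel hquot
  have hint : Integrable
      (fun ω => Z ω * deconvKernel (fourierK K) (charRV P U) h (x - (X ω + U ω))) P :=
    hZ.mul_bdd (hcont.comp_aestronglyMeasurable (hX.add hU |>.const_sub x).aestronglyMeasurable)
      (.of_forall fun ω => norm_deconvKernel_le _ _ _ _)
  calc ∫ ω, Z ω * deconvKernel (fourierK K) (charRV P U) h (x - (X ω + U ω)) ∂P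
      = ∫ ω, ∫ ω', Z ω * deconvKernel (fourierK K) (charRV P U) h (x - (X ω + U ω')) ∂P ∂P :=
        integral_comp_prodMk_of_indepFun (hX.prodMk hZ.aemeasurable) hU hindep
          (f := fun p => p.1.2 * deconvKernel (fourierK K) (charRV P U) h (x - (p.1.1 + p.2)))
          (Continuous.stronglyMeasurable (by fun_prop)) hint
    _ = ∫ ω, Z ω * deconvKernel (fourierK K) 1 h (x - X ω) ∂P := by
        simp only [integral_const_mul, ← sub_sub, integral_deconvKernel_sub hU hφU hquot]
    _ = ∫ ω, Z ω * (h⁻¹ * K ((x - X ω) / h) : ℝ) ∂P := by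
        simp only [deconvKernel_fourierK_one hKint hφKint hKcont.continuousAt]

/-- `E[ψ(Y)·K_{U,h}(x − W)] = E[ψ(Y)·h⁻¹K((x − X)/h)]` with `W = X + U`,
`U` independent of `(X, Y)` and `φ_U` nonvanishing. -/
theorem deconv_kernel_unbiased_rv
    {Ω : Type*} [MeasurableSpace Ω] (P : Measure Ω) [IsProbabilityMeasure P]
    (X Y U : Ω → ℝ) (hX : Measurable X) (hY : Measurable Y) (hU : Measurable U)
    (hindep : ProbabilityTheory.IndepFun (fun ω => (X ω, Y ω)) U P)
    (hφU : ∀ t : ℝ, charRV P U t ≠ 0)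
    (K : ℝ → ℝ) (hKcont : Continuous K) (hKint : Integrable K)
    (hφKint : Integrable (fourierK K))
    (hφKsupp : Function.support (fourierK K) ⊆ Set.Icc (-1 : ℝ) 1)
    (ψ : ℝ → ℝ) (hψm : Measurable ψ) (Cψ : ℝ) (hψb : ∀ y : ℝ, |ψ y| ≤ Cψ)
    (x h : ℝ) (hh : 0 < h) :
    ∫ ω, (ψ (Y ω) : ℂ) * deconvKernel (fourierK K) (charRV P U) h (x - (X ω + U ω)) ∂P
      = ∫ ω, ((ψ (Y ω) * (h⁻¹ * K ((x - X ω) / h)) : ℝ) : ℂ) ∂P := by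
  have hquot : Integrable fun t => fourierK K t / charRV P U (t / h) :=
    integrable_div_of_support_subset isCompact_Icc hφKint hφKsupp
      ((continuous_charRV hU.aemeasurable).comp (continuous_id.div_const h)).continuousOn
      fun t _ => hφU (t / h)
  have hψY : Integrable (fun ω => (ψ (Y ω) : ℂ)) P :=
    .of_bound (Measurable.aestronglyMeasurable (by fun_prop)) Cψ <| .of_forall fun ω => by
      simpa using hψb (Y ω)
  have hindep' : ProbabilityTheory.IndepFun (fun ω => (X ω, (ψ (Y ω) : ℂ))) U P :=
    hindep.comp (φ := fun p => (p.1, (ψ p.2 : ℂ))) (by fun_prop) measurable_id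
  simpa only [Complex.ofReal_mul] using deconv_kernel_unbiased_rv_general hX.aemeasurable
    hU.aemeasurable hψY hindep' hφU hKcont hKint hh.ne' hquot x
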